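/- arXiv:1710.04293 — 2 statements merged into one kernel-verified Lean document; each statement's English description precedes it below -/
import Mathlib

section
/- For every sequence of integers 0 ≤ μ_1 < μ_2 < ⋯ < μ_s ≤ n-1, the squarefree product P := Z_{μ_1} · Z_{μ_2} · ⋯ · Z_{μ_s} ∈ K_t, where t = μ_1 + ⋯ + μ_s, satisfies d_t(P) = 0 and P does not lie in the image of d_{t+1} : K_{t+1} → K_t; that is, every squarefree monomial in Z_0, …, Z_{n-1} represents a nonzero class in the Koszul homology H_*(𝔪²). -/
set_option maxHeartbeats 1000000
set_option synthInstance.maxHeartbeats 400000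

open scoped TensorProduct
open MvPolynomial

noncomputable section

variable (k : Type) [Field k] (n : ℕ)

/-- The polynomial ring `S = k[x_1,…,x_n]`. -/
abbrev S := MvPolynomial (Fin n) k

/-- The space `S_1` of linear forms. -/
abbrev S1 := homogeneousSubmodule (Fin n) k 1

/-- The space `S_2` of quadratic forms. -/
abbrev S2 := homogeneousSubmodule (Fin n) k 2

/-- The ambient algebra `S ⊗ Λ(S_2)` containing all terms `K_t = S ⊗ ⋀^t S_2`
of the Koszul complex `K(𝔪², S)`; the product is `(f ⊗ ω)(g ⊗ η) = fg ⊗ ω∧η`. -/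
abbrev KK := (MvPolynomial (Fin n) k) ⊗[k] ExteriorAlgebra k (S2 k n)

variable {k n}

/-- The product of two linear forms, as an element of `S_2`. -/
def mulW (a b : S1 k n) : S2 k n :=
  ⟨(a : S k n) * (b : S k n), by
    rw [mem_homogeneousSubmodule]
    have ha := (mem_homogeneousSubmodule 1 (a : S k n)).1 a.2
    have hb := (mem_homogeneousSubmodule 1 (b : S k n)).1 b.2
    simpa using ha.mul hb⟩

/-- The variable `x_i`, as an element of `S_1`. -/
def xv (i : Fin n) : S1 k n :=
  ⟨X i, by rw [mem_homogeneousSubmodule]; exact isHomogeneous_X _ _⟩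

/-- The quadratic monomial `x_i x_j`, as an element of `S_2`. -/
def q (i j : Fin n) : S2 k n := mulW (xv i) (xv j)

variable (k n)

/-- `K_t = S ⊗ ⋀^t S_2`, as a subspace of the ambient algebra `KK`. -/
def Kt (t : ℕ) : Submodule k (KK k n) :=
  LinearMap.range (TensorProduct.map (LinearMap.id : S k n →ₗ[k] S k n)
    (Submodule.subtype (⋀[k]^t (S2 k n))))

variable {k n}

/-- The family of Koszul differentials, encoded as linear endomorphisms of the
ambient space `KK`: `D t` restricted to `K_t` is the `t`-th Koszul differential
`d_t : K_t → K_{t-1}`, i.e. `d_0 = 0` and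
`d_t(f ⊗ m_1 ∧ ⋯ ∧ m_t) = Σ_j (-1)^{j-1} (f·m_j) ⊗ m_1 ∧ ⋯ ∧ m̂_j ∧ ⋯ ∧ m_t`. -/
def IsKoszulDiff (D : ℕ → KK k n →ₗ[k] KK k n) : Prop :=
  D 0 = 0 ∧
  ∀ (t : ℕ) (f : S k n) (m : Fin (t+1) → S2 k n),
    D (t+1) (f ⊗ₜ[k] (ExteriorAlgebra.ιMulti k (t+1) m : ExteriorAlgebra k (S2 k n)))
      = ∑ j : Fin (t+1), ((-1:ℤ)^(j:ℕ)) •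
          ((f * ((m j : S k n))) ⊗ₜ[k]
            (ExteriorAlgebra.ιMulti k t (fun l => m (j.succAbove l)) : ExteriorAlgebra k (S2 k n)))

/-- The cycle `z_{a,b} = Σ_{σ ∈ 𝔖_{t+1}} sgn(σ) a_{σ(t+1)} ⊗ (b_1 a_{σ(1)} ∧ ⋯ ∧ b_t a_{σ(t)})`. -/
def zel (t : ℕ) (a : Fin (t+1) → S1 k n) (b : Fin t → S1 k n) : KK k n :=
  ∑ σ : Equiv.Perm (Fin (t+1)),
    ((Equiv.Perm.sign σ : ℤ)) •
      (((a (σ (Fin.last t)) : S k n)) ⊗ₜ[k]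
        (ExteriorAlgebra.ιMulti k t (fun j => mulW (b j) (a (σ j.castSucc))) :
          ExteriorAlgebra k (S2 k n)))

/-- The cycle `Z_i` (0-indexed: `Zel i` is the paper's `Z_i` for `0 ≤ i ≤ n-1`), namely
`Z_i = Σ_{j=0}^{i} (-1)^{j} x_j ⊗ (x_0 x_i ∧ ⋯ ∧ x̂_j x_i ∧ ⋯ ∧ x_{i-1} x_i ∧ x_i²)`. -/
def Zel (i : Fin n) : KK k n :=
  ∑ j : Fin ((i:ℕ)+1),
    ((-1:ℤ)^(j:ℕ)) •
      ((X (Fin.castLE i.isLt j) : S k n) ⊗ₜ[k]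
        (ExteriorAlgebra.ιMulti k (i:ℕ)
          (fun l : Fin (i:ℕ) => q (Fin.castLE i.isLt (j.succAbove l)) i) :
            ExteriorAlgebra k (S2 k n)))

/-!
Since `x_i Z_i` is the boundary of `x_1x_i ∧ ⋯ ∧ x_i²` and `x_i` is a nonzerodivisor, `Z_i` is a
cycle, and products of cycles are cycles by the Leibniz rule.

Killing the squares `x_i²` leaves the single term `± x_i ⊗ (x_1x_i ∧ ⋯ ∧ x_{i-1}x_i)` of `Z_i`, so
the product `P` of the `Z_i`, `i ∈ M`, becomes `± ∏ x_i` tensored with the wedge of all `x_j x_i`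
with `j < i ∈ M`, which are distinct. Read off this coefficient with the linear form that takes the
coefficient of `∏ x_i` in `S` and a determinant in the coefficients at these `x_j x_i` on `⋀ S_2`.
It is `± 1` on `P`. It vanishes on boundaries: `d` multiplies by a quadratic form, of which only the
coefficients at divisors of `∏ x_i` matter, and the quadratic divisors are all of the form `x_j x_i`
with `j < i ∈ M`; so one obtains the expansion of a determinant with a repeated column.
-/

open ExteriorAlgebra (ι ιMulti)

section Determinants

variable {R : Type*} [CommRing R]

lemma sum_neg_one_pow_mul_det_succAbove_eq_zero {t : ℕ} (ψ : (Fin t → R) →ₗ[R] R)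
    (v : Fin (t + 1) → Fin t → R) :
    ∑ j : Fin (t + 1), (-1) ^ (j : ℕ) * ψ (v j) * Matrix.det (fun a => v (j.succAbove a)) = 0 := by
  have repeated_column (b : Fin t) : ∑ j : Fin (t + 1),
      (-1) ^ (j : ℕ) * v j b * Matrix.det (fun a => v (j.succAbove a)) = 0 := by
    let N : Matrix (Fin (t + 1)) (Fin (t + 1)) R := fun j => Fin.cons (v j b) (v j)
    have hN : N.det = 0 :=
      Matrix.det_zero_of_column_eq (Fin.succ_ne_zero b).symm fun j => by simp [N]
    rw [← hN, Matrix.det_succ_column_zero]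
    rfl
  simp_rw [LinearMap.pi_apply_eq_sum_univ ψ (v _), Finset.mul_sum, Finset.sum_mul]
  rw [Finset.sum_comm]
  refine Finset.sum_eq_zero fun b _ => ?_
  calc _ = (∑ j : Fin (t + 1), (-1) ^ (j : ℕ) * v j b * Matrix.det (fun a => v (j.succAbove a))) *
          ψ fun c => if b = c then 1 else 0 := by
        rw [Finset.sum_mul]
        exact Finset.sum_congr rfl fun j _ => by rw [smul_eq_mul]; ring
    _ = 0 := by rw [repeated_column, zero_mul]

variable (R) in
/-- The linear form on `⋀ Rᵗ` that is the determinant in degree `t` and zero in all other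
degrees. -/
def detForm (t : ℕ) : ExteriorAlgebra R (Fin t → R) →ₗ[R] R :=
  ExteriorAlgebra.liftAlternating (Pi.single t Matrix.detRowAlternating)

lemma detForm_ιMulti {t : ℕ} (v : Fin t → Fin t → R) :
    detForm R t (ιMulti R t v) = Matrix.det v := by
  rw [detForm, ExteriorAlgebra.liftAlternating_apply_ιMulti, Pi.single_eq_same]
  rfl

lemma prod_map_ι_eq_ιMulti {M α : Type*} [AddCommGroup M] [Module R M] (l : List α) (g : α → M) :
    (l.map fun a => ι R (g a)).prod = ιMulti R l.length fun i => g l[i] := by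
  rw [ExteriorAlgebra.ιMulti_apply]
  exact congrArg List.prod (List.ofFn_getElem_eq_map l _).symm

end Determinants

section Exponents

variable {σ : Type*}

lemma exists_eq_single_add_single_of_degree_eq_two {b : σ →₀ ℕ} (hb : b.degree = 2) :
    ∃ x y, b = Finsupp.single x 1 + Finsupp.single y 1 := by
  classical
  obtain ⟨x, y, hxy⟩ : ∃ x y, Finsupp.toMultiset b = {x, y} :=
    Multiset.card_eq_two.1 ((Finsupp.card_toMultiset b).trans hb)
  refine ⟨x, y, Finsupp.orderIsoMultiset.injective ?_⟩
  simp [hxy, Multiset.insert_eq_cons]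

lemma prod_map_X_eq_monomial {R : Type*} [CommSemiring R] [DecidableEq σ] (M : List σ) :
    (M.map fun i => (X i : MvPolynomial σ R)).prod =
      monomial (Multiset.toFinsupp (M : Multiset σ)) 1 := by
  induction M with
  | nil => simp
  | cons i M ih =>
    rw [List.map_cons, List.prod_cons, ih, ← Multiset.cons_coe, ← Multiset.singleton_add, map_add,
      Multiset.toFinsupp_singleton, X, monomial_mul, one_mul]

end Exponents

section KoszulTerms

lemma Kt_eq_span (t : ℕ) : Kt k n t = Submodule.span k
    (Set.image2 (fun f m => f ⊗ₜ[k] ιMulti k t m) (Set.univ : Set (S k n)) Set.univ) := by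
  rw [Kt, TensorProduct.range_map, LinearMap.range_id, Submodule.range_subtype,
    ← ExteriorAlgebra.ιMulti_span_fixedDegree, ← Submodule.span_univ, Submodule.map₂_span_span,
    ← Set.image_univ, Set.image2_image_right]
  rfl

lemma tmul_ιMulti_mem_Kt {t : ℕ} (f : S k n) (m : Fin t → S2 k n) :
    f ⊗ₜ[k] ιMulti k t m ∈ Kt k n t := by
  rw [Kt_eq_span]
  exact Submodule.subset_span ⟨f, trivial, m, trivial, rfl⟩

lemma eqOn_Kt {V : Type*} [AddCommGroup V] [Module k V] {t : ℕ} {φ ψ : KK k n →ₗ[k] V}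
    (h : ∀ f m, φ (f ⊗ₜ[k] ιMulti k t m) = ψ (f ⊗ₜ[k] ιMulti k t m)) :
    Set.EqOn φ ψ (Kt k n t) := by
  rw [Kt_eq_span]
  refine LinearMap.eqOn_span ?_
  rintro _ ⟨f, -, m, -, rfl⟩
  exact h f m

instance Kt_gradedMonoid : SetLike.GradedMonoid (Kt k n) where
  one_mem := by
    simpa [Algebra.TensorProduct.one_def] using tmul_ιMulti_mem_Kt (k := k) (n := n) 1 Fin.elim0
  mul_mem a b u v hu hv := by
    have hmul : Kt k n a * Kt k n b ≤ Kt k n (a + b) := by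
      rw [Kt_eq_span a, Kt_eq_span b, Submodule.span_mul_span, Submodule.span_le]
      rintro _ ⟨_, ⟨f, -, m, -, rfl⟩, _, ⟨g, -, l, -, rfl⟩, rfl⟩
      simp only [Algebra.TensorProduct.tmul_mul_tmul, ExteriorAlgebra.ιMulti_mul_ιMulti]
      exact tmul_ιMulti_mem_Kt (f * g) (Fin.append m l)
    exact hmul (Submodule.mul_mem_mul hu hv)

lemma tmul_ιMulti_cons {t : ℕ} (f : S k n) (m : S2 k n) (v : Fin t → S2 k n) :
    f ⊗ₜ[k] ιMulti k (t + 1) (Fin.cons m v : Fin (t + 1) → S2 k n) =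
      (1 ⊗ₜ[k] ι k m) * (f ⊗ₜ[k] ιMulti k t v : KK k n) := by
  rw [Algebra.TensorProduct.tmul_mul_tmul, one_mul, ExteriorAlgebra.ιMulti_succ_apply]
  rfl

end KoszulTerms

namespace IsKoszulDiff

variable {D : ℕ → KK k n →ₗ[k] KK k n} {t : ℕ} {u : KK k n}

lemma mem_Kt (hD : IsKoszulDiff D) (hu : u ∈ Kt k n (t + 1)) : D (t + 1) u ∈ Kt k n t := by
  suffices Kt k n (t + 1) ≤ (Kt k n t).comap (D (t + 1)) from this hu
  rw [Kt_eq_span (t + 1), Submodule.span_le]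
  rintro _ ⟨f, -, m, -, rfl⟩
  rw [SetLike.mem_coe, Submodule.mem_comap, hD.2]
  exact sum_mem fun j _ => zsmul_mem (tmul_ιMulti_mem_Kt _ _) _

lemma map_smul_of_mem (hD : IsKoszulDiff D) (g : S k n) (hu : u ∈ Kt k n t) :
    D t (g • u) = g • D t u := by
  refine eqOn_Kt (φ := D t ∘ₗ Algebra.lsmul k k _ g) (ψ := Algebra.lsmul k k _ g ∘ₗ D t)
    (fun f m => ?_) hu
  simp only [LinearMap.comp_apply, Algebra.lsmul_coe, TensorProduct.smul_tmul', smul_eq_mul]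
  cases t with
  | zero => simp [hD.1]
  | succ t =>
    simp only [hD.2, Finset.smul_sum, smul_comm g, TensorProduct.smul_tmul', smul_eq_mul, mul_assoc]

lemma map_ι_mul (hD : IsKoszulDiff D) (m : S2 k n) (hu : u ∈ Kt k n t) :
    D (t + 1) ((1 ⊗ₜ ι k m) * u) = (m : S k n) • u - (1 ⊗ₜ ι k m) * D t u := by
  refine eqOn_Kt (φ := D (t + 1) ∘ₗ LinearMap.mulLeft k (1 ⊗ₜ ι k m))
    (ψ := Algebra.lsmul k k _ (m : S k n) - LinearMap.mulLeft k (1 ⊗ₜ ι k m) ∘ₗ D t)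
    (fun f v => ?_) hu
  simp only [LinearMap.comp_apply, LinearMap.sub_apply, LinearMap.mulLeft_apply, Algebra.lsmul_coe]
  rw [← tmul_ιMulti_cons, hD.2, Fin.sum_univ_succ, sub_eq_add_neg]
  congr 1
  · simp [TensorProduct.smul_tmul', mul_comm]
  · cases t with
    | zero => simp [hD.1]
    | succ t =>
      rw [hD.2, Finset.mul_sum, ← Finset.sum_neg_distrib]
      refine Finset.sum_congr rfl fun j _ => ?_
      have hcons : (fun l => (Fin.cons m v : Fin (t + 2) → S2 k n) (j.succ.succAbove l)) =
          Fin.cons m fun l => v (j.succAbove l) := by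
        ext l : 1
        cases l using Fin.cases <;> simp
      rw [hcons, tmul_ιMulti_cons, Fin.cons_succ, Fin.val_succ, pow_succ, mul_neg_one, neg_smul,
        mul_smul_comm]

lemma map_map_eq_zero (hD : IsKoszulDiff D) (hu : u ∈ Kt k n (t + 1)) :
    D t (D (t + 1) u) = 0 := by
  induction t generalizing u with
  | zero => simp [hD.1]
  | succ t ih =>
    refine eqOn_Kt (φ := D (t + 1) ∘ₗ D (t + 2)) (ψ := 0) (fun f m => ?_) hu
    have hw : f ⊗ₜ[k] ιMulti k (t + 1) (Fin.tail m) ∈ Kt k n (t + 1) := tmul_ιMulti_mem_Kt _ _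
    rw [← Fin.cons_self_tail m, tmul_ιMulti_cons, LinearMap.comp_apply, hD.map_ι_mul _ hw, map_sub,
      hD.map_smul_of_mem _ hw, hD.map_ι_mul _ (hD.mem_Kt hw), ih hw]
    simp

lemma map_mul_of_mem (hD : IsKoszulDiff D) {a b : ℕ} {v : KK k n} (hu : u ∈ Kt k n a)
    (hv : v ∈ Kt k n b) :
    D (a + b) (u * v) = D a u * v + (-1 : ℤ) ^ a • (u * D b v) := by
  refine eqOn_Kt (φ := D (a + b) ∘ₗ LinearMap.mulRight k v)
    (ψ := LinearMap.mulRight k v ∘ₗ D a + (-1 : ℤ) ^ a • LinearMap.mulRight k (D b v))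
    (fun f m => ?_) hu
  simp only [LinearMap.comp_apply, LinearMap.add_apply, LinearMap.smul_apply,
    LinearMap.mulRight_apply]
  clear hu
  induction a with
  | zero =>
    have hf (w : KK k n) : f ⊗ₜ[k] ιMulti k 0 m * w = f • w := by
      rw [ExteriorAlgebra.ιMulti_zero_apply]
      exact (Algebra.smul_def f w).symm
    rw [hf, hf, zero_add, hD.map_smul_of_mem _ hv, hD.1]
    simp
  | succ a ih =>
    have hw : f ⊗ₜ[k] ιMulti k a (Fin.tail m) ∈ Kt k n a := tmul_ιMulti_mem_Kt _ _
    rw [← Fin.cons_self_tail m, tmul_ιMulti_cons, Nat.succ_add, mul_assoc,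
      hD.map_ι_mul _ (SetLike.mul_mem_graded hw hv), hD.map_ι_mul _ hw, ih,
      pow_succ, mul_neg_one, neg_smul, mul_add, sub_mul, mul_smul_comm, smul_mul_assoc]
    simp only [mul_assoc]
    abel

end IsKoszulDiff

section Cycles

variable {D : ℕ → KK k n →ₗ[k] KK k n}

lemma Zel_mem_Kt (i : Fin n) : (Zel i : KK k n) ∈ Kt k n i :=
  sum_mem fun _ _ => zsmul_mem (tmul_ιMulti_mem_Kt _ _) _

lemma IsKoszulDiff.map_tmul_ιMulti_q_eq_X_smul_Zel (hD : IsKoszulDiff D) (i : Fin n) :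
    D (i + 1) (1 ⊗ₜ ιMulti k (i + 1) fun j => q (Fin.castLE i.isLt j) i) =
      (X i : S k n) • Zel i := by
  rw [hD.2, Zel, Finset.smul_sum]
  refine Finset.sum_congr rfl fun j _ => ?_
  rw [smul_comm (X i : S k n), TensorProduct.smul_tmul' (X i : S k n), one_mul, smul_eq_mul,
    mul_comm (X i)]
  rfl

lemma IsKoszulDiff.map_Zel (hD : IsKoszulDiff D) (i : Fin n) : D i (Zel i) = 0 := by
  have hX : (X i : S k n) • D i (Zel i) = 0 := by
    rw [← hD.map_smul_of_mem _ (Zel_mem_Kt i), ← hD.map_tmul_ιMulti_q_eq_X_smul_Zel,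
      hD.map_map_eq_zero (tmul_ιMulti_mem_Kt _ _)]
  exact (smul_eq_zero_iff_right (X_ne_zero i)).1 hX

lemma prod_map_Zel_mem_Kt (M : List (Fin n)) :
    (M.map (Zel (k := k))).prod ∈ Kt k n (M.map Fin.val).sum :=
  SetLike.list_prod_map_mem_graded M _ _ fun i _ => Zel_mem_Kt i

lemma IsKoszulDiff.map_prod_map_Zel (hD : IsKoszulDiff D) (M : List (Fin n)) :
    D (M.map Fin.val).sum (M.map Zel).prod = 0 := by
  induction M with
  | nil => simp [hD.1]
  | cons i M ih =>
    simp only [List.map_cons, List.prod_cons, List.sum_cons]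
    rw [hD.map_mul_of_mem (Zel_mem_Kt i) (prod_map_Zel_mem_Kt M), ih, hD.map_Zel]
    simp

end Cycles

section SquarefreeReduction

variable {W : Type*} [AddCommGroup W] [Module k W]

/-- The algebra map `id ⊗ ⋀L` out of the Koszul algebra induced by a linear map `L` on quadratic
forms; an `L` that kills the squares isolates a single term of each `Z_i`. -/
def wedgeMap (L : S2 k n →ₗ[k] W) :
    KK k n →ₐ[k] S k n ⊗[k] ExteriorAlgebra k W :=
  Algebra.TensorProduct.map (AlgHom.id k _) (ExteriorAlgebra.map L)

lemma wedgeMap_tmul_ιMulti (L : S2 k n →ₗ[k] W) {t : ℕ} (f : S k n) (m : Fin t → S2 k n) :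
    wedgeMap L (f ⊗ₜ ιMulti k t m) = f ⊗ₜ ιMulti k t (L ∘ m) := by
  rw [wedgeMap, Algebra.TensorProduct.map_tmul, ExteriorAlgebra.map_apply_ιMulti, AlgHom.id_apply]

/-- The pairs `(j, i)` with `j < i`, in increasing order of `j`; they index the quadratic monomials
`x_j x_i` in the only term of `Z_i` free of `x_i²`. -/
def pairsBelow (i : Fin n) : List (Fin n × Fin n) :=
  List.ofFn fun j : Fin i => (Fin.castLE i.isLt.le j, i)

lemma mem_pairsBelow {i : Fin n} {p : Fin n × Fin n} :
    p ∈ pairsBelow i ↔ p.1 < p.2 ∧ p.2 = i := by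
  obtain ⟨a, b⟩ := p
  simp only [pairsBelow, List.mem_ofFn, Prod.mk.injEq]
  constructor
  · rintro ⟨j, rfl, rfl⟩
    exact ⟨j.isLt, rfl⟩
  · rintro ⟨hab, rfl⟩
    exact ⟨⟨a, hab⟩, rfl, rfl⟩

lemma mem_flatMap_pairsBelow {M : List (Fin n)} {p : Fin n × Fin n} :
    p ∈ M.flatMap pairsBelow ↔ p.1 < p.2 ∧ p.2 ∈ M := by
  simp [List.mem_flatMap, mem_pairsBelow, and_comm]

lemma length_flatMap_pairsBelow (M : List (Fin n)) :
    (M.flatMap pairsBelow).length = (M.map Fin.val).sum := by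
  simp [List.length_flatMap, pairsBelow]

lemma nodup_flatMap_pairsBelow {M : List (Fin n)} (hM : M.Nodup) :
    (M.flatMap pairsBelow).Nodup := by
  refine List.nodup_flatMap.2 ⟨fun i _ => List.nodup_ofFn.2 fun a b hab => ?_,
    hM.imp fun hij p hi hj => ?_⟩
  · simpa using hab
  · exact hij ((mem_pairsBelow.1 hi).2.symm.trans (mem_pairsBelow.1 hj).2)

variable {L : S2 k n →ₗ[k] W}

lemma wedgeMap_Zel {i : Fin n} (hL : L (q i i) = 0) :
    wedgeMap L (Zel i) =
      (-1 : ℤ) ^ (i : ℕ) • X i ⊗ₜ ((pairsBelow i).map fun p => ι k (L (q p.1 p.2))).prod := by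
  have hlast : Fin.castLE i.isLt (Fin.last i) = i := rfl
  have vanish (j : Fin (i + 1)) (hj : j ≠ Fin.last i) :
      ιMulti k i (L ∘ fun l => q (Fin.castLE i.isLt (j.succAbove l)) i) = 0 := by
    obtain ⟨l, hl⟩ := Fin.exists_succAbove_eq hj.symm
    exact AlternatingMap.map_coord_zero _ l (by rw [Function.comp_apply, hl, hlast, hL])
  simp only [Zel, map_sum, map_zsmul, wedgeMap_tmul_ιMulti]
  rw [Finset.sum_eq_single_of_mem (Fin.last i) (Finset.mem_univ _) fun j _ hj => by
    rw [vanish j hj, TensorProduct.tmul_zero, smul_zero]]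
  simp only [Fin.val_last, hlast, ExteriorAlgebra.ιMulti_apply, pairsBelow, List.map_ofFn,
    Fin.succAbove_last]
  rfl

lemma wedgeMap_prod_map_Zel {M : List (Fin n)} (hL : ∀ i ∈ M, L (q i i) = 0) :
    wedgeMap L (M.map Zel).prod = (-1 : ℤ) ^ (M.map Fin.val).sum •
      (M.map X).prod ⊗ₜ ((M.flatMap pairsBelow).map fun p => ι k (L (q p.1 p.2))).prod := by
  induction M with
  | nil => simp [← Algebra.TensorProduct.one_def]
  | cons i M ih =>
    obtain ⟨hi, hM⟩ := List.forall_mem_cons.1 hL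
    simp only [List.map_cons, List.prod_cons, List.sum_cons, map_mul, wedgeMap_Zel hi, ih hM,
      List.flatMap_cons, List.map_append, List.prod_append, pow_add]
    rw [smul_mul_smul_comm, Algebra.TensorProduct.tmul_mul_tmul]

end SquarefreeReduction

section Detection

variable {D : ℕ → KK k n →ₗ[k] KK k n}

/-- The linear form `f ⊗ ω ↦ [xᵉ] f · det (⋀L ω)` on the Koszul algebra, where `L` is a `t`-tuple
of linear forms on `S_2`; it detects homology classes in degree `t`. -/
def coeffDet (e : Fin n →₀ ℕ) {t : ℕ} (L : S2 k n →ₗ[k] Fin t → k) : KK k n →ₗ[k] k :=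
  TensorProduct.dualDistrib k _ _ (lcoeff k e ⊗ₜ detForm k t) ∘ₗ (wedgeMap L).toLinearMap

lemma coeffDet_tmul_ιMulti (e : Fin n →₀ ℕ) {t : ℕ} (L : S2 k n →ₗ[k] Fin t → k) (f : S k n)
    (m : Fin t → S2 k n) :
    coeffDet e L (f ⊗ₜ ιMulti k t m) = coeff e f * Matrix.det fun a => L (m a) := by
  simp [coeffDet, wedgeMap_tmul_ιMulti, detForm_ιMulti, Function.comp_def]

-- Each coefficient of `f` contributes the expansion of a determinant whose first column depends
-- linearly on the others.
lemma IsKoszulDiff.coeffDet_map_eq_zero (hD : IsKoszulDiff D) {e : Fin n →₀ ℕ} {t : ℕ}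
    {L : S2 k n →ₗ[k] Fin t → k}
    (hL : ∀ b ≤ e, ∃ ψ : (Fin t → k) →ₗ[k] k, ∀ m : S2 k n, coeff b (m : S k n) = ψ (L m))
    {u : KK k n} (hu : u ∈ Kt k n (t + 1)) : coeffDet e L (D (t + 1) u) = 0 := by
  refine eqOn_Kt (φ := coeffDet e L ∘ₗ D (t + 1)) (ψ := 0) (fun f m => ?_) hu
  calc coeffDet e L (D (t + 1) (f ⊗ₜ ιMulti k (t + 1) m))
      = ∑ x ∈ Finset.HasAntidiagonal.antidiagonal e, coeff x.1 f * ∑ j : Fin (t + 1),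
          (-1) ^ (j : ℕ) * coeff x.2 (m j : S k n) *
            Matrix.det fun a => L (m (j.succAbove a)) := by
        simp only [hD.2, map_sum, map_zsmul, coeffDet_tmul_ιMulti, coeff_mul, Finset.sum_mul,
          Finset.mul_sum, Finset.smul_sum]
        rw [Finset.sum_comm]
        refine Finset.sum_congr rfl fun x _ => Finset.sum_congr rfl fun j _ => ?_
        rw [zsmul_eq_mul]
        push_cast
        ring
    _ = 0 := Finset.sum_eq_zero fun x hx => by
        obtain ⟨ψ, hψ⟩ := hL x.2 (Finset.HasAntidiagonal.antidiagonal.snd_le hx)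
        simp only [hψ]
        rw [sum_neg_one_pow_mul_det_succAbove_eq_zero ψ fun j => L (m j), mul_zero]

/-- The coefficient of `x_i x_j` in a quadratic form, for the pair `(i, j)`. -/
def quadCoeff (p : Fin n × Fin n) : S2 k n →ₗ[k] k :=
  lcoeff k (Finsupp.single p.1 1 + Finsupp.single p.2 1) ∘ₗ (S2 k n).subtype

lemma quadCoeff_q {p : Fin n × Fin n} (hp : p.1 < p.2) {i j : Fin n} (hij : i ≤ j) :
    quadCoeff p (q i j : S2 k n) = if (i, j) = p then 1 else 0 := by
  have hq : ((q i j : S2 k n) : S k n) =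
      monomial (Finsupp.single i 1 + Finsupp.single j 1) 1 := by
    simp [q, mulW, xv, X, monomial_mul]
  have hexp : (Finsupp.single i 1 + Finsupp.single j 1 : Fin n →₀ ℕ) =
      Finsupp.single p.1 1 + Finsupp.single p.2 1 ↔ (i, j) = p := by
    rw [Finsupp.single_add_single_eq_single_add_single one_ne_zero one_ne_zero, Prod.ext_iff]
    grind
  simp [quadCoeff, hq, coeff_monomial, hexp]

/-- The coefficients of a quadratic form at the monomials `x_j x_i` with `j < i` and `i ∈ M`. -/
def coeffsBelow (M : List (Fin n)) : S2 k n →ₗ[k] Fin (M.flatMap pairsBelow).length → k :=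
  LinearMap.pi fun a => quadCoeff (M.flatMap pairsBelow)[a]

lemma fst_lt_snd_getElem_flatMap_pairsBelow (M : List (Fin n))
    (a : Fin (M.flatMap pairsBelow).length) :
    (M.flatMap pairsBelow)[a].1 < (M.flatMap pairsBelow)[a].2 :=
  (mem_flatMap_pairsBelow.1 (List.getElem_mem _)).1

lemma coeffsBelow_q_self (M : List (Fin n)) (i : Fin n) :
    coeffsBelow M (q i i : S2 k n) = 0 := by
  ext a
  have hlt := fst_lt_snd_getElem_flatMap_pairsBelow M a
  rw [coeffsBelow, LinearMap.pi_apply, quadCoeff_q hlt le_rfl, if_neg, Pi.zero_apply]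
  intro h
  rw [← h] at hlt
  exact hlt.false

lemma det_coeffsBelow_q {M : List (Fin n)} (hM : M.Nodup) :
    Matrix.det (fun a : Fin (M.flatMap pairsBelow).length => coeffsBelow M
      (q (M.flatMap pairsBelow)[a].1 (M.flatMap pairsBelow)[a].2 : S2 k n)) = 1 := by
  refine (congrArg Matrix.det (Matrix.ext fun a b => ?_)).trans Matrix.det_one
  rw [coeffsBelow, LinearMap.pi_apply, quadCoeff_q (fst_lt_snd_getElem_flatMap_pairsBelow M b)
    (fst_lt_snd_getElem_flatMap_pairsBelow M a).le, Matrix.one_apply]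
  congr 1
  simp [(nodup_flatMap_pairsBelow hM).getElem_inj_iff, Fin.ext_iff]

lemma coeffDet_coeffsBelow_prod_map_Zel {M : List (Fin n)} (hM : M.Nodup) :
    coeffDet (Multiset.toFinsupp (M : Multiset (Fin n))) (coeffsBelow M) (M.map (Zel (k := k))).prod
      = (-1) ^ (M.map Fin.val).sum := by
  have hdet : detForm k _ ((M.flatMap pairsBelow).map fun p =>
      ι k (coeffsBelow M (q p.1 p.2 : S2 k n))).prod = 1 := by
    rw [prod_map_ι_eq_ιMulti _ fun p : Fin n × Fin n => coeffsBelow M (q p.1 p.2 : S2 k n),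
      detForm_ιMulti, det_coeffsBelow_q hM]
  rw [coeffDet, LinearMap.comp_apply, AlgHom.toLinearMap_apply,
    wedgeMap_prod_map_Zel fun i _ => coeffsBelow_q_self M i, map_zsmul,
    TensorProduct.dualDistrib_apply, hdet, prod_map_X_eq_monomial]
  simp

lemma exists_mem_flatMap_pairsBelow_of_degree_eq_two {M : List (Fin n)} (hM : M.Nodup)
    {b : Fin n →₀ ℕ} (hb : b ≤ Multiset.toFinsupp (M : Multiset (Fin n))) (hdeg : b.degree = 2) :
    ∃ p ∈ M.flatMap pairsBelow, b = Finsupp.single p.1 1 + Finsupp.single p.2 1 := by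
  obtain ⟨x, y, rfl⟩ := exists_eq_single_add_single_of_degree_eq_two hdeg
  have hcount (z : Fin n) : Finsupp.single x 1 z + Finsupp.single y 1 z ≤ M.count z := by
    simpa using hb z
  have hx : x ∈ M := List.count_pos_iff.1 (by grind [Finsupp.single_eq_same])
  have hy : y ∈ M := List.count_pos_iff.1 (by grind [Finsupp.single_eq_same])
  have hxy : x ≠ y := by
    rintro rfl
    grind [Finsupp.single_eq_same, List.nodup_iff_count_le_one.1 hM x]
  rcases hxy.lt_or_gt with hlt | hgt
  · exact ⟨(x, y), mem_flatMap_pairsBelow.2 ⟨hlt, hy⟩, rfl⟩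
  · exact ⟨(y, x), mem_flatMap_pairsBelow.2 ⟨hgt, hx⟩, add_comm _ _⟩

lemma exists_coeff_eq_comp_coeffsBelow {M : List (Fin n)} (hM : M.Nodup) {b : Fin n →₀ ℕ}
    (hb : b ≤ Multiset.toFinsupp (M : Multiset (Fin n))) :
    ∃ ψ : (Fin (M.flatMap pairsBelow).length → k) →ₗ[k] k,
      ∀ m : S2 k n, coeff b (m : S k n) = ψ (coeffsBelow M m) := by
  by_cases hdeg : b.degree = 2
  · obtain ⟨p, hp, rfl⟩ := exists_mem_flatMap_pairsBelow_of_degree_eq_two hM hb hdeg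
    obtain ⟨a, ha, rfl⟩ := List.getElem_of_mem hp
    exact ⟨LinearMap.proj ⟨a, ha⟩, fun m => rfl⟩
  · exact ⟨0, fun m => ((mem_homogeneousSubmodule 2 _).1 m.2).coeff_eq_zero hdeg⟩

lemma IsKoszulDiff.prod_map_Zel_notMem_map (hD : IsKoszulDiff D) {M : List (Fin n)} (hM : M.Nodup) :
    (M.map Zel).prod ∉
      (Kt k n ((M.map Fin.val).sum + 1)).map (D ((M.map Fin.val).sum + 1)) := by
  rw [← length_flatMap_pairsBelow]
  rintro ⟨u, hu, hP⟩
  have hzero := hD.coeffDet_map_eq_zero (fun _ hb => exists_coeff_eq_comp_coeffsBelow hM hb) hu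
  rw [hP, coeffDet_coeffsBelow_prod_map_Zel hM] at hzero
  exact pow_ne_zero _ (neg_ne_zero.2 one_ne_zero) hzero

end Detection

theorem squarefree_product_nonzero_class_general (k : Type) [Field k] (n : ℕ)
    (s : ℕ) (μ : Fin s → Fin n) (hμ : Function.Injective μ)
    (D : ℕ → KK k n →ₗ[k] KK k n) (hD : IsKoszulDiff D) :
    (((List.finRange s).map (fun l => (Zel (μ l) : KK k n))).prod ∈
        Kt k n (∑ l, (μ l : ℕ))) ∧
      D (∑ l, (μ l : ℕ)) (((List.finRange s).map (fun l => (Zel (μ l) : KK k n))).prod) = 0 ∧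
      ((List.finRange s).map (fun l => (Zel (μ l) : KK k n))).prod ∉
        Submodule.map (D ((∑ l, (μ l : ℕ)) + 1)) (Kt k n ((∑ l, (μ l : ℕ)) + 1)) := by
  let M := (List.finRange s).map μ
  have hM : M.Nodup := (List.nodup_finRange s).map hμ
  have hprod : (List.finRange s).map (fun l => (Zel (μ l) : KK k n)) = M.map Zel :=
    (List.map_map (g := Zel)).symm
  have hsum : ∑ l, (μ l : ℕ) = (M.map Fin.val).sum := by
    rw [Fin.sum_univ_def, List.map_map]
    rfl
  rw [hprod, hsum]
  exact ⟨prod_map_Zel_mem_Kt M, hD.map_prod_map_Zel M, hD.prod_map_Zel_notMem_map hM⟩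

/-- For every strictly increasing sequence `0 ≤ μ_1 < ⋯ < μ_s ≤ n-1`,
the squarefree product `P = Z_{μ_1} ⋯ Z_{μ_s} ∈ K_t`, `t = μ_1 + ⋯ + μ_s`, satisfies
`d_t(P) = 0` and `P` is not in the image of `d_{t+1} : K_{t+1} → K_t`; i.e. every
squarefree monomial in `Z_0, …, Z_{n-1}` represents a nonzero Koszul homology class. -/
theorem squarefree_product_nonzero_class (k : Type) [Field k] [CharZero k] (n : ℕ)
    (s : ℕ) (μ : Fin s → Fin n) (hμ : StrictMono μ)
    (D : ℕ → KK k n →ₗ[k] KK k n) (hD : IsKoszulDiff D) :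
    (((List.finRange s).map (fun l => (Zel (μ l) : KK k n))).prod ∈
        Kt k n (∑ l, (μ l : ℕ))) ∧
      D (∑ l, (μ l : ℕ)) (((List.finRange s).map (fun l => (Zel (μ l) : KK k n))).prod) = 0 ∧
      ((List.finRange s).map (fun l => (Zel (μ l) : KK k n))).prod ∉
        Submodule.map (D ((∑ l, (μ l : ℕ)) + 1)) (Kt k n ((∑ l, (μ l : ℕ)) + 1)) := by
  exact squarefree_product_nonzero_class_general k n s μ hμ.injective D hD

end
end

section
/- For every t ≥ 0 and all sequences a = (a_1, …, a_{t+1}) and b = (b_1, …, b_t) of variables from {x_1, …, x_n} (repetitions allowed), the element z_{a,b} lies in the k-linear span of the elements z_{a',b'} over all semistandard pairs (a', b') of sequences of variables of the same length. -/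
set_option maxHeartbeats 1000000
set_option synthInstance.maxHeartbeats 400000

open scoped TensorProduct
open MvPolynomial

noncomputable section

variable (k : Type) [Field k] (n : ℕ)

variable {k n}

variable (k n)

variable {k n}

/-- A pair of sequences of variables `a = (x_{i_1},…,x_{i_{t+1}})`, `b = (x_{j_1},…,x_{j_t})`
is *semistandard* if `i_1 < ⋯ < i_{t+1}`, `j_1 ≤ ⋯ ≤ j_t` and `i_1 ≤ j_1`. -/
def Semistandard {n t : ℕ} (a : Fin (t+1) → Fin n) (b : Fin t → Fin n) : Prop :=
  StrictMono a ∧ Monotone b ∧ ∀ h : 0 < t, a 0 ≤ b ⟨0, h⟩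

/-!
Write `z_{a,b}` as the antisymmetrization in `a` of
`T_b(u) = u_{t+1} ⊗ (b_1 u_1 ∧ ⋯ ∧ b_t u_t)`. It is alternating in `a`, and symmetric in `b`: the
sign produced by permuting the wedge factors cancels the one produced by reindexing the sum. So
once some `a_l` is at most every `b_j`, sorting both sequences gives, up to sign, zero or a
semistandard element.

The remaining pairs are handled by the exchange relation
`z_{a,b} = Σ_l z_{a[l ↦ b_i], b[i ↦ a_l]}`, applied to a minimal `b_i`. To prove it, group the terms
on the right by the position `m` at which `b_i` enters `T`. For `m = i` the two factors of
`b_i u_i` merely trade places and the terms add up to `z_{a,b}`. For `m ≠ i` the `i`-th wedge factor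
is `u_m u_i` while every other factor is independent of `u_m` and `u_i`, so antisymmetrization
kills the sum.
-/

section Antisymmetrize

open Equiv Equiv.Perm

variable {ι M N : Type*} [Fintype ι] [DecidableEq ι] [AddCommGroup N]

theorem sum_sign_smul_eq_zero_of_swap_mul {i j : ι} (hij : i ≠ j) {g : Perm ι → N}
    (hg : ∀ σ, g (swap i j * σ) = g σ) : ∑ σ, sign σ • g σ = 0 := by
  refine Finset.sum_involution (fun σ _ => swap i j * σ) (fun σ _ => ?_)
    (fun σ _ _ => (not_congr swap_mul_eq_iff).mpr hij) (fun σ _ => Finset.mem_univ _)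
    fun σ _ => swap_mul_involutive i j σ
  rw [hg, Perm.sign_mul, sign_swap hij, neg_one_mul, Units.neg_smul, add_neg_cancel]

theorem sum_sign_smul_eq_zero_of_mul_swap {i j : ι} (hij : i ≠ j) {g : Perm ι → N}
    (hg : ∀ σ, g (σ * swap i j) = g σ) : ∑ σ, sign σ • g σ = 0 := by
  rw [← Equiv.sum_comp (Equiv.inv (Perm ι))]
  simp only [Equiv.inv_apply, sign_inv]
  refine sum_sign_smul_eq_zero_of_swap_mul hij fun σ => ?_
  rw [mul_inv_rev, swap_inv, hg]

/-- The antisymmetrization of an arbitrary function `f` of a family of arguments; on multilinear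
maps it is `MultilinearMap.alternatization`. -/
def antisymmetrize (f : (ι → M) → N) (v : ι → M) : N :=
  ∑ σ : Perm ι, sign σ • f (v ∘ σ)

theorem antisymmetrize_comp_perm (f : (ι → M) → N) (v : ι → M) (τ : Perm ι) :
    antisymmetrize f (v ∘ τ) = sign τ • antisymmetrize f v := by
  rw [antisymmetrize, antisymmetrize, Finset.smul_sum]
  refine Fintype.sum_equiv (Equiv.mulLeft τ) _ _ fun σ => ?_
  rw [coe_mulLeft, Perm.sign_mul, smul_smul, ← mul_assoc, Int.units_mul_self, one_mul, coe_mul,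
    Function.comp_assoc]

theorem antisymmetrize_precomp_perm (f : (ι → M) → N) (v : ι → M) (τ : Perm ι) :
    antisymmetrize (fun u => f (u ∘ τ)) v = sign τ • antisymmetrize f v := by
  rw [antisymmetrize, antisymmetrize, Finset.smul_sum]
  refine Fintype.sum_equiv (Equiv.mulRight τ) _ _ fun σ => ?_
  rw [coe_mulRight, Perm.sign_mul, smul_smul, mul_left_comm, Int.units_mul_self, mul_one, coe_mul,
    Function.comp_assoc]

theorem antisymmetrize_eq_zero_of_not_injective (f : (ι → M) → N) {v : ι → M}
    (hv : ¬ Function.Injective v) : antisymmetrize f v = 0 := by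
  obtain ⟨i, j, hvij, hij⟩ := Function.not_injective_iff.mp hv
  refine sum_sign_smul_eq_zero_of_swap_mul hij fun σ => ?_
  rw [coe_mul, ← Function.comp_assoc, Equiv.comp_swap_eq_update, hvij, Function.update_eq_self,
    ← hvij, Function.update_eq_self]

theorem antisymmetrize_eq_zero_of_comp_swap {f : (ι → M) → N} {i j : ι} (hij : i ≠ j)
    (hf : ∀ u, f (u ∘ swap i j) = f u) (v : ι → M) : antisymmetrize f v = 0 :=
  sum_sign_smul_eq_zero_of_mul_swap hij fun σ => by rw [coe_mul, ← Function.comp_assoc, hf]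

theorem sum_antisymmetrize_update (f : M → (ι → M) → N) (v : ι → M) (c : M) :
    ∑ l, antisymmetrize (f (v l)) (Function.update v l c) =
      ∑ m, antisymmetrize (fun u => f (u m) (Function.update u m c)) v := by
  simp only [antisymmetrize]
  rw [Finset.sum_comm, Finset.sum_comm (s := Finset.univ (α := ι))]
  refine Finset.sum_congr rfl fun σ _ => (Fintype.sum_equiv σ _ _ fun m => ?_).symm
  rw [Function.update_comp_equiv, Equiv.symm_apply_apply, Function.comp_apply]

end Antisymmetrize

section Zel

open Equiv Equiv.Perm Function

variable {t : ℕ}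

theorem mulW_comm (a b : S1 k n) : mulW a b = mulW b a :=
  Subtype.ext (mul_comm _ _)

/-- The term of `zel t u b` indexed by the identity permutation: the tensor
`u_{t+1} ⊗ (b_1 u_1 ∧ ⋯ ∧ b_t u_t)`, of which `zel` is the antisymmetrization in `u`. -/
def zelTerm (b : Fin t → S1 k n) (u : Fin (t + 1) → S1 k n) : KK k n :=
  (u (Fin.last t) : S k n) ⊗ₜ[k]
    (ExteriorAlgebra.ιMulti k t fun j => mulW (b j) (u j.castSucc))

theorem zel_eq_antisymmetrize (a : Fin (t + 1) → S1 k n) (b : Fin t → S1 k n) :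
    zel t a b = antisymmetrize (zelTerm b) a :=
  rfl

theorem viaFintypeEmbedding_castSuccEmb_last (τ : Perm (Fin t)) :
    τ.viaFintypeEmbedding Fin.castSuccEmb (Fin.last t) = Fin.last t :=
  viaFintypeEmbedding_apply_notMem_range _ _ fun ⟨j, hj⟩ => Fin.castSucc_ne_last j hj

theorem zelTerm_comp_perm (b : Fin t → S1 k n) (u : Fin (t + 1) → S1 k n) (τ : Perm (Fin t)) :
    zelTerm (b ∘ τ) (u ∘ τ.viaFintypeEmbedding Fin.castSuccEmb) = sign τ • zelTerm b u := by
  have castSucc_apply (j : Fin t) :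
      τ.viaFintypeEmbedding Fin.castSuccEmb j.castSucc = (τ j).castSucc :=
    viaFintypeEmbedding_apply_image τ Fin.castSuccEmb j
  have wedge_perm := (ExteriorAlgebra.ιMulti k t).map_perm
    (fun j => mulW (b j) (u j.castSucc)) τ
  simp only [comp_def] at wedge_perm
  simp only [zelTerm, comp_apply, viaFintypeEmbedding_castSuccEmb_last, castSucc_apply,
    wedge_perm, Units.smul_def, TensorProduct.tmul_smul]

theorem zel_comp_perm_left (a : Fin (t + 1) → S1 k n) (b : Fin t → S1 k n)
    (τ : Perm (Fin (t + 1))) : zel t (a ∘ τ) b = sign τ • zel t a b :=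
  antisymmetrize_comp_perm (zelTerm b) a τ

theorem zel_comp_perm_right (a : Fin (t + 1) → S1 k n) (b : Fin t → S1 k n) (τ : Perm (Fin t)) :
    zel t a (b ∘ τ) = zel t a b := by
  set τ' := τ.viaFintypeEmbedding Fin.castSuccEmb
  have sign_eq : sign τ' = sign τ := viaFintypeEmbedding_sign _ _
  have signs_agree : sign τ • zel t a (b ∘ τ) = sign τ • zel t a b := calc
    sign τ • zel t a (b ∘ τ) = antisymmetrize (fun u => zelTerm (b ∘ τ) (u ∘ τ')) a := by
      rw [antisymmetrize_precomp_perm, sign_eq, zel_eq_antisymmetrize]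
    _ = antisymmetrize (fun u => sign τ • zelTerm b u) a := by
      simp only [τ', zelTerm_comp_perm]
    _ = sign τ • zel t a b := by
      simp only [antisymmetrize, zel_eq_antisymmetrize, Finset.smul_sum, smul_comm (sign τ)]
  exact smul_left_cancel _ signs_agree

theorem zelTerm_update_castSucc (b : Fin t → S1 k n) (u : Fin (t + 1) → S1 k n) (i : Fin t) :
    zelTerm (update b i (u i.castSucc)) (update u i.castSucc (b i)) = zelTerm b u := by
  unfold zelTerm
  congr 2
  · rw [update_of_ne (Fin.castSucc_ne_last i).symm]
  · funext j
    rcases eq_or_ne j i with rfl | hj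
    · rw [update_self, update_self, mulW_comm]
    · rw [update_of_ne hj, update_of_ne (Fin.castSucc_injective t |>.ne hj)]

theorem zelTerm_update_comp_swap (b : Fin t → S1 k n) (c : S1 k n) {i : Fin t} {m : Fin (t + 1)}
    (hm : i.castSucc ≠ m) (u : Fin (t + 1) → S1 k n) :
    zelTerm (update b i ((u ∘ swap i.castSucc m) m)) (update (u ∘ swap i.castSucc m) m c) =
      zelTerm (update b i (u m)) (update u m c) := by
  have update_comp_swap_of_ne {x : Fin (t + 1)} (hx : x ≠ i.castSucc) :
      update (u ∘ swap i.castSucc m) m c x = update u m c x := by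
    rcases eq_or_ne x m with rfl | hxm
    · rw [update_self, update_self]
    · rw [update_of_ne hxm, update_of_ne hxm, comp_apply, swap_apply_of_ne_of_ne hx hxm]
  unfold zelTerm
  congr 2
  · rw [update_comp_swap_of_ne (Fin.castSucc_ne_last i).symm]
  · funext j
    rcases eq_or_ne j i with rfl | hj
    · simp only [update_self, update_of_ne hm, comp_apply, swap_apply_left, swap_apply_right]
      exact mulW_comm _ _
    · rw [update_of_ne hj, update_of_ne hj,
        update_comp_swap_of_ne (Fin.castSucc_injective t |>.ne hj)]

theorem zel_eq_sum_zel_update (a : Fin (t + 1) → S1 k n) (b : Fin t → S1 k n) (i : Fin t) :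
    zel t a b = ∑ l, zel t (update a l (b i)) (update b i (a l)) := by
  symm
  simp only [zel_eq_antisymmetrize]
  rw [sum_antisymmetrize_update (fun x => zelTerm (update b i x)), Fintype.sum_eq_single i.castSucc]
  · simp only [zelTerm_update_castSucc]
  · exact fun m hm => antisymmetrize_eq_zero_of_comp_swap hm.symm
      (zelTerm_update_comp_swap b (b i) hm.symm) a

end Zel

section Straightening

open Function

variable {t : ℕ}

variable (k n t) in
/-- The span of the elements `z_{a,b}` over all semistandard pairs of sequences of variables. -/
def semistandardSpan : Submodule k (KK k n) :=
  Submodule.span k {w : KK k n |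
    ∃ (a : Fin (t + 1) → Fin n) (b : Fin t → Fin n), Semistandard a b ∧
      w = zel t (fun l => (xv (a l) : S1 k n)) (fun l => xv (b l))}

theorem semistandard_comp_sort {a : Fin (t + 1) → Fin n} {b : Fin t → Fin n} (ha : Injective a)
    {l : Fin (t + 1)} (hl : ∀ j, a l ≤ b j) :
    Semistandard (a ∘ Tuple.sort a) (b ∘ Tuple.sort b) := by
  refine ⟨(Tuple.monotone_sort a).strictMono_of_injective (ha.comp (Tuple.sort a).injective),
    Tuple.monotone_sort b, fun _ => ?_⟩
  have head_le : (a ∘ Tuple.sort a) 0 ≤ a l := by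
    simpa using Tuple.monotone_sort a (Fin.zero_le ((Tuple.sort a).symm l))
  exact head_le.trans (hl _)

theorem zel_mem_semistandardSpan_of_forall_le {a : Fin (t + 1) → Fin n} {b : Fin t → Fin n}
    {l : Fin (t + 1)} (hl : ∀ j, a l ≤ b j) :
    zel t (xv ∘ a) (xv ∘ b) ∈ semistandardSpan k n t := by
  by_cases ha : Injective a
  · have sorted_mem : zel t ((xv ∘ a) ∘ Tuple.sort a) ((xv ∘ b) ∘ Tuple.sort b) ∈
        semistandardSpan k n t :=
      Submodule.subset_span ⟨_, _, semistandard_comp_sort ha hl, rfl⟩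
    rw [zel_comp_perm_left, zel_comp_perm_right] at sorted_mem
    rcases Int.units_eq_one_or (Equiv.Perm.sign (Tuple.sort a)) with hsign | hsign
    · rwa [hsign, one_smul] at sorted_mem
    · rwa [hsign, Units.neg_smul, one_smul, neg_mem_iff] at sorted_mem
  · rw [zel_eq_antisymmetrize,
      antisymmetrize_eq_zero_of_not_injective _ fun h => ha h.of_comp]
    exact Submodule.zero_mem _

theorem zel_in_span_semistandard_general (k : Type) [Field k] (n : ℕ)
    (t : ℕ) (a : Fin (t + 1) → Fin n) (b : Fin t → Fin n) :
    (zel t (fun l => (xv (a l) : S1 k n)) (fun l => xv (b l)) : KK k n) ∈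
      Submodule.span k {w : KK k n |
        ∃ (a' : Fin (t + 1) → Fin n) (b' : Fin t → Fin n), Semistandard a' b' ∧
          w = zel t (fun l => (xv (a' l) : S1 k n)) (fun l => xv (b' l))} := by
  change zel t (xv ∘ a) (xv ∘ b) ∈ semistandardSpan k n t
  by_cases hmin : ∃ l, ∀ j, a l ≤ b j
  · obtain ⟨l, hl⟩ := hmin
    exact zel_mem_semistandardSpan_of_forall_le hl
  push Not at hmin
  have : Nonempty (Fin t) := (hmin 0).nonempty
  obtain ⟨i, hi⟩ := Finite.exists_min b
  have lt_all (l : Fin (t + 1)) : b i < a l :=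
    have ⟨j, hj⟩ := hmin l
    (hi j).trans_lt hj
  rw [zel_eq_sum_zel_update _ _ i]
  refine Submodule.sum_mem _ fun l _ => ?_
  simp only [comp_apply, ← comp_update]
  refine zel_mem_semistandardSpan_of_forall_le (l := l) fun j => ?_
  rw [update_self]
  exact (forall_update_iff b fun _ x => b i ≤ x).mpr ⟨(lt_all l).le, fun j _ => hi j⟩ j

end Straightening

/-- For every `t ≥ 0` and all sequences `a`, `b` of variables (repetitions
allowed), the element `z_{a,b}` lies in the `k`-linear span of the elements `z_{a',b'}` over
all semistandard pairs `(a',b')` of sequences of variables of the same length. -/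
theorem zel_in_span_semistandard (k : Type) [Field k] [CharZero k] (n : ℕ)
    (t : ℕ) (a : Fin (t+1) → Fin n) (b : Fin t → Fin n) :
    (zel t (fun l => (xv (a l) : S1 k n)) (fun l => xv (b l)) : KK k n) ∈
      Submodule.span k {w : KK k n |
        ∃ (a' : Fin (t+1) → Fin n) (b' : Fin t → Fin n), Semistandard a' b' ∧
          w = zel t (fun l => (xv (a' l) : S1 k n)) (fun l => xv (b' l))} := by
  exact zel_in_span_semistandard_general k n t a b

end
end
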